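/- For every k ≥ 1 there exists an unsatisfiable hitting clause-set F with deficiency δ(F) = k and with exactly S₂(k) full clauses; consequently S₂(k) ≤ max{nfc(F) : F unsatisfiable hitting, δ(F) = k}. -/

import Mathlib

/-- The Smarandache primitive number `S₂(k)`: the least `n` such that `2^k` divides `n!`. -/
noncomputable def S2 (k : ℕ) : ℕ := sInf {n : ℕ | 2 ^ k ∣ Nat.factorial n}

/-- A clause: a finite set of nonzero integers (literals) that is clash-free. -/
def IsClause (C : Finset ℤ) : Prop := (0 : ℤ) ∉ C ∧ ∀ x ∈ C, -x ∉ C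

/-- A clause-set: a finite set of clauses. -/
def IsClauseSet (F : Finset (Finset ℤ)) : Prop := ∀ C ∈ F, IsClause C

/-- The variables of a clause: the absolute values of its literals. -/
def clauseVar (C : Finset ℤ) : Finset ℕ := C.image Int.natAbs

/-- The variables of a clause-set. -/
def var (F : Finset (Finset ℤ)) : Finset ℕ := F.biUnion clauseVar

/-- The number of variables `n(F)`. -/
def numVar (F : Finset (Finset ℤ)) : ℕ := (var F).card

/-- The deficiency `δ(F) = c(F) - n(F)`. -/
def deficiency (F : Finset (Finset ℤ)) : ℤ := (F.card : ℤ) - (numVar F : ℤ)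

/-- `F` is satisfiable iff some clause `C` intersects every clause of `F`. -/
def Satisfiable (F : Finset (Finset ℤ)) : Prop :=
  ∃ C : Finset ℤ, IsClause C ∧ ∀ D ∈ F, (C ∩ D).Nonempty

/-- `F` is hitting iff any two distinct clauses of `F` clash. -/
def Hitting (F : Finset (Finset ℤ)) : Prop :=
  ∀ C ∈ F, ∀ D ∈ F, C ≠ D → ∃ x ∈ C, -x ∈ D

/-- `F` is minimally unsatisfiable. -/
def MinUnsat (F : Finset (Finset ℤ)) : Prop :=
  ¬ Satisfiable F ∧ ∀ G ⊂ F, Satisfiable G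

/-- The number of full clauses of `F`. -/
def nfc (F : Finset (Finset ℤ)) : ℕ :=
  (F.filter (fun C => clauseVar C = var F)).card

/-- The degree of a variable `v` in `F`. -/
def vdeg (F : Finset (Finset ℤ)) (v : ℕ) : ℕ :=
  (F.filter (fun C => v ∈ clauseVar C)).card

/-- The minimal variable-degree of `F` (for `n(F) > 0`). -/
noncomputable def minVarDeg (F : Finset (Finset ℤ)) : ℕ :=
  sInf {d : ℕ | ∃ v ∈ var F, vdeg F v = d}

/-!
Replacing each clause `A` of a nonempty `S ⊆ F` by `A ∪ {v}` and `A ∪ {-v}`, for a fresh variable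
`v`, keeps `F` unsatisfiable and hitting and raises the deficiency by `|S| - 1`. If `S` consists of
full clauses, then the new full clauses are exactly the `2|S|` clauses created by the splitting.
The numbers `S₂(k)` obey a matching recursion: Legendre's formula gives
`S₂(l + m) ≤ 2m ↔ S₂(l) ≤ m`. Since `S₂(k)` is even, it can be written as `2(n + 1)`, and for
`l = k - n` the equivalence yields `n + 1 ≤ S₂(l)`; so a clause-set of deficiency `l` with `S₂(l)`
full clauses has `n + 1` full clauses to split, which produces deficiency `k` and `S₂(k)` full
clauses.

The supremum is taken over a bounded set because a full clause `C` and the clauses of `F` obtained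
by flipping a literal `y ≠ x` of `C` (and then shrinking, as `F` is unsatisfiable) are `n(F)`
distinct clauses without `-x`. So at most `δ(F)` clauses contain `-x`.
-/

section Clauses

variable {C D : Finset ℤ} {F : Finset (Finset ℤ)} {x : ℤ} {v : ℕ}

theorem natAbs_mem_clauseVar : x.natAbs ∈ clauseVar C ↔ x ∈ C ∨ -x ∈ C := by
  simp [clauseVar, Int.natAbs_eq_natAbs_iff, and_or_left, exists_or]

theorem mem_clauseVar : v ∈ clauseVar C ↔ (v : ℤ) ∈ C ∨ -(v : ℤ) ∈ C := by
  simpa using natAbs_mem_clauseVar (C := C) (x := v)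

theorem clauseVar_insert (x : ℤ) (C : Finset ℤ) :
    clauseVar (insert x C) = insert x.natAbs (clauseVar C) :=
  Finset.image_insert _ _ _

theorem clauseVar_subset_var (hC : C ∈ F) : clauseVar C ⊆ var F :=
  Finset.subset_biUnion_of_mem clauseVar hC

theorem var_mono {G : Finset (Finset ℤ)} (h : F ⊆ G) : var F ⊆ var G :=
  Finset.biUnion_subset_biUnion_of_subset_left clauseVar h

theorem var_union (F G : Finset (Finset ℤ)) : var (F ∪ G) = var F ∪ var G :=
  Finset.union_biUnion

theorem IsClause.mono (hD : IsClause D) (h : C ⊆ D) : IsClause C :=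
  ⟨fun h0 => hD.1 (h h0), fun x hx hx' => hD.2 x (h hx) (h hx')⟩

theorem IsClause.insert (hC : IsClause C) (hx : x ≠ 0) (h : -x ∉ C) : IsClause (insert x C) := by
  have hx2 : -x ≠ x := by omega
  refine ⟨by simpa [hx.symm] using hC.1, fun y hy hy' => ?_⟩
  rcases Finset.mem_insert.1 hy with rfl | hyC <;> rcases Finset.mem_insert.1 hy' with h' | h'
  · exact hx2 h'
  · exact h h'
  · exact h (by rwa [← h', neg_neg])
  · exact hC.2 y hyC h'

theorem IsClause.image_neg (hC : IsClause C) : IsClause (C.image (-·)) := by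
  refine ⟨by simpa using hC.1, Finset.forall_mem_image.2 fun y hy hy' => hC.2 y hy ?_⟩
  simpa [neg_eq_iff_eq_neg] using hy'

theorem IsClause.card_clauseVar (hC : IsClause C) : (clauseVar C).card = C.card := by
  refine Finset.card_image_of_injOn fun x hx y hy h => ?_
  rcases Int.natAbs_eq_natAbs_iff.1 h with h | rfl
  · exact h
  · exact absurd hx (hC.2 y hy)

/-- Two clauses clash if some literal of the first has its complement in the second;
`Hitting F` asks that any two distinct clauses of `F` clash. -/
def Clash (C D : Finset ℤ) : Prop := ∃ x ∈ C, -x ∈ D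

theorem Clash.symm : Clash C D → Clash D C := fun ⟨x, hxC, hxD⟩ => ⟨-x, hxD, by rwa [neg_neg]⟩

theorem Clash.mono {C' D' : Finset ℤ} (h : Clash C D) (hC : C ⊆ C') (hD : D ⊆ D') :
    Clash C' D' :=
  let ⟨x, hxC, hxD⟩ := h
  ⟨x, hC hxC, hD hxD⟩

theorem IsClause.not_clash_self (hC : IsClause C) : ¬ Clash C C := fun ⟨x, hx, hx'⟩ => hC.2 x hx hx'

theorem Hitting.isAntichain (hh : Hitting F) (hF : IsClauseSet F) :
    IsAntichain (· ⊆ ·) (F : Set (Finset ℤ)) := fun C hC D hD hne hCD =>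
  (hF D hD).not_clash_self (Clash.mono (hh C hC D hD hne) hCD subset_rfl)

/-- The full clauses of `F`, those in which every variable of `F` occurs; `nfc F` is their
number. -/
def fullClauses (F : Finset (Finset ℤ)) : Finset (Finset ℤ) :=
  F.filter fun C => clauseVar C = var F

theorem mem_fullClauses : C ∈ fullClauses F ↔ C ∈ F ∧ clauseVar C = var F := Finset.mem_filter

/-- Unsatisfiable hitting clause-sets, the class over which the number of full clauses is
maximised. -/
structure UnsatHitting (F : Finset (Finset ℤ)) : Prop where
  isClauseSet : IsClauseSet F
  not_satisfiable : ¬ Satisfiable F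
  hitting : Hitting F

theorem unsatHitting_singleton_empty : UnsatHitting {∅} where
  isClauseSet := by simp [IsClauseSet, IsClause]
  not_satisfiable := by simp [Satisfiable]
  hitting := by simp [Hitting]

end Clauses

section SplitClause

variable {A C D E : Finset ℤ} {v : ℕ}

/-- The two clauses `A ∪ {v}` and `A ∪ {-v}` into which `A` is split by the variable `v`. -/
def splitClause (v : ℕ) (A : Finset ℤ) : Finset (Finset ℤ) :=
  {insert (v : ℤ) A, insert (-(v : ℤ)) A}

theorem mem_splitClause :
    D ∈ splitClause v A ↔ D = insert (v : ℤ) A ∨ D = insert (-(v : ℤ)) A := by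
  simp [splitClause]

theorem subset_of_mem_splitClause (hD : D ∈ splitClause v A) : A ⊆ D := by
  rcases mem_splitClause.1 hD with rfl | rfl <;> exact Finset.subset_insert _ _

theorem clauseVar_of_mem_splitClause (hD : D ∈ splitClause v A) :
    clauseVar D = insert v (clauseVar A) := by
  rcases mem_splitClause.1 hD with rfl | rfl <;> simp [clauseVar_insert]

theorem filter_natAbs_ne_of_mem_splitClause (hv : v ∉ clauseVar A) (hD : D ∈ splitClause v A) :
    (D.filter fun x => x.natAbs ≠ v) = A := by
  have hA : (A.filter fun x => x.natAbs ≠ v) = A :=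
    Finset.filter_true_of_mem fun x hx hxv => hv (hxv ▸ Finset.mem_image_of_mem _ hx)
  rcases mem_splitClause.1 hD with rfl | rfl <;> simpa [Finset.filter_insert] using hA

theorem IsClause.of_mem_splitClause (hA : IsClause A) (hv : v ∉ clauseVar A) (hv0 : v ≠ 0)
    (hD : D ∈ splitClause v A) : IsClause D := by
  rw [mem_clauseVar, not_or] at hv
  rcases mem_splitClause.1 hD with rfl | rfl
  · exact hA.insert (by simpa using hv0) hv.2
  · exact hA.insert (by simpa using hv0) (by simpa using hv.1)

theorem clash_of_mem_splitClause (hD : D ∈ splitClause v A) (hE : E ∈ splitClause v A)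
    (hne : D ≠ E) : Clash D E := by
  have h : Clash (insert (v : ℤ) A) (insert (-(v : ℤ)) A) :=
    ⟨v, Finset.mem_insert_self _ _, Finset.mem_insert_self _ _⟩
  rcases mem_splitClause.1 hD with rfl | rfl <;> rcases mem_splitClause.1 hE with rfl | rfl
  · exact absurd rfl hne
  · exact h
  · exact h.symm
  · exact absurd rfl hne

theorem IsClause.inter_nonempty_of_splitClause (hC : IsClause C)
    (h : ∀ D ∈ splitClause v A, (C ∩ D).Nonempty) : (C ∩ A).Nonempty := by
  obtain ⟨x, hx⟩ := h _ (mem_splitClause.2 (.inl rfl))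
  obtain ⟨y, hy⟩ := h _ (mem_splitClause.2 (.inr rfl))
  rw [Finset.mem_inter, Finset.mem_insert] at hx hy
  obtain ⟨hxC, rfl | hxA⟩ := hx
  · obtain ⟨hyC, rfl | hyA⟩ := hy
    · exact absurd hyC (hC.2 _ hxC)
    · exact ⟨y, Finset.mem_inter.2 ⟨hyC, hyA⟩⟩
  · exact ⟨x, Finset.mem_inter.2 ⟨hxC, hxA⟩⟩

theorem card_splitClause (hv : v ∉ clauseVar A) (hv0 : v ≠ 0) : (splitClause v A).card = 2 := by
  rw [mem_clauseVar, not_or] at hv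
  refine Finset.card_pair fun h => ?_
  have hmem : (v : ℤ) ∈ insert (-(v : ℤ)) A := h ▸ Finset.mem_insert_self _ _
  rcases Finset.mem_insert.1 hmem with h | h
  · omega
  · exact hv.1 h

theorem card_biUnion_splitClause {S : Finset (Finset ℤ)} (hv : v ∉ var S) (hv0 : v ≠ 0) :
    (S.biUnion (splitClause v)).card = 2 * S.card := by
  have hfresh : ∀ A ∈ S, v ∉ clauseVar A := fun A hA h => hv (clauseVar_subset_var hA h)
  rw [Finset.card_biUnion, Finset.sum_congr rfl fun A hA => card_splitClause (hfresh A hA) hv0,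
    Finset.sum_const, smul_eq_mul, mul_comm]
  intro A hA B hB hne
  refine Finset.disjoint_left.2 fun D hDA hDB => hne ?_
  rw [← filter_natAbs_ne_of_mem_splitClause (hfresh A hA) hDA,
    filter_natAbs_ne_of_mem_splitClause (hfresh B hB) hDB]

theorem insert_clauseVar_subset_var_biUnion {S : Finset (Finset ℤ)} (hA : A ∈ S) :
    insert v (clauseVar A) ⊆ var (S.biUnion (splitClause v)) := by
  have hD : insert (v : ℤ) A ∈ splitClause v A := mem_splitClause.2 (.inl rfl)
  rw [← clauseVar_of_mem_splitClause hD]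
  exact clauseVar_subset_var (Finset.mem_biUnion.2 ⟨A, hA, hD⟩)

theorem var_biUnion_splitClause {S : Finset (Finset ℤ)} (hS0 : S.Nonempty) :
    var (S.biUnion (splitClause v)) = insert v (var S) := by
  obtain ⟨B, hB⟩ := hS0
  refine Finset.Subset.antisymm (Finset.biUnion_subset.2 fun D hD => ?_)
    (Finset.insert_subset ?_ (Finset.biUnion_subset.2 fun A hA => ?_))
  · obtain ⟨A, hA, hDA⟩ := Finset.mem_biUnion.1 hD
    rw [clauseVar_of_mem_splitClause hDA]
    exact Finset.insert_subset_insert v (clauseVar_subset_var hA)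
  · exact insert_clauseVar_subset_var_biUnion hB (Finset.mem_insert_self _ _)
  · exact (Finset.subset_insert _ _).trans (insert_clauseVar_subset_var_biUnion hA)

end SplitClause

section SplitOn

variable {F S : Finset (Finset ℤ)} {D : Finset ℤ} {v : ℕ}

/-- The clause-set obtained from `F` by splitting the clauses in `S` by the variable `v`. It is
meant for `S ⊆ F` and a positive `v` not occurring in `F`. -/
def splitOn (F S : Finset (Finset ℤ)) (v : ℕ) : Finset (Finset ℤ) :=
  F \ S ∪ S.biUnion (splitClause v)

theorem mem_splitOn :
    D ∈ splitOn F S v ↔ (D ∈ F ∧ D ∉ S) ∨ ∃ A ∈ S, D ∈ splitClause v A := by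
  simp only [splitOn, Finset.mem_union, Finset.mem_sdiff, Finset.mem_biUnion]

theorem IsClauseSet.splitOn (hF : IsClauseSet F) (hS : S ⊆ F) (hv : v ∉ var F) (hv0 : v ≠ 0) :
    IsClauseSet (splitOn F S v) := by
  intro D hD
  rcases mem_splitOn.1 hD with ⟨hDF, -⟩ | ⟨A, hA, hDA⟩
  · exact hF D hDF
  · exact (hF A (hS hA)).of_mem_splitClause (fun h => hv (clauseVar_subset_var (hS hA) h)) hv0 hDA

theorem not_satisfiable_splitOn (h : ¬ Satisfiable F) : ¬ Satisfiable (splitOn F S v) := by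
  rintro ⟨C, hC, hsat⟩
  refine h ⟨C, hC, fun A hA => ?_⟩
  by_cases hAS : A ∈ S
  · exact hC.inter_nonempty_of_splitClause fun D hD => hsat D (mem_splitOn.2 (.inr ⟨A, hAS, hD⟩))
  · exact hsat A (mem_splitOn.2 (.inl ⟨hA, hAS⟩))

theorem Hitting.splitOn (hF : Hitting F) (hS : S ⊆ F) : Hitting (splitOn F S v) := by
  have clash_split : ∀ {B C D}, C ∈ F → B ∈ S → C ≠ B → D ∈ splitClause v B → Clash C D :=
    fun hC hB hne hD => Clash.mono (hF _ hC _ (hS hB) hne) subset_rfl (subset_of_mem_splitClause hD)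
  intro C hC D hD hne
  rcases mem_splitOn.1 hC with ⟨hCF, hCS⟩ | ⟨A, hA, hCA⟩ <;>
    rcases mem_splitOn.1 hD with ⟨hDF, hDS⟩ | ⟨B, hB, hDB⟩
  · exact hF C hCF D hDF hne
  · exact clash_split hCF hB (ne_of_mem_of_not_mem hB hCS).symm hDB
  · exact (clash_split hDF hA (ne_of_mem_of_not_mem hA hDS).symm hCA).symm
  · obtain rfl | hAB := eq_or_ne A B
    · exact clash_of_mem_splitClause hCA hDB hne
    · exact (clash_split (hS hA) hB hAB hDB).mono (subset_of_mem_splitClause hCA) subset_rfl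

theorem var_splitOn (hS : S ⊆ F) (hS0 : S.Nonempty) : var (splitOn F S v) = insert v (var F) := by
  rw [splitOn, var_union, var_biUnion_splitClause hS0, Finset.union_insert, ← var_union,
    Finset.sdiff_union_of_subset hS]

theorem card_splitOn (hS : S ⊆ F) (hv : v ∉ var F) (hv0 : v ≠ 0) :
    (splitOn F S v).card = F.card + S.card := by
  have hdisj : Disjoint (F \ S) (S.biUnion (splitClause v)) := by
    refine Finset.disjoint_left.2 fun D hDF hDS => hv ?_
    obtain ⟨A, -, hDA⟩ := Finset.mem_biUnion.1 hDS
    refine clauseVar_subset_var (Finset.mem_sdiff.1 hDF).1 ?_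
    rw [clauseVar_of_mem_splitClause hDA]
    exact Finset.mem_insert_self _ _
  rw [splitOn, Finset.card_union_of_disjoint hdisj,
    card_biUnion_splitClause (fun h => hv (var_mono hS h)) hv0,
    ← Finset.card_sdiff_add_card_eq_card hS]
  ring

theorem deficiency_splitOn (hS : S ⊆ F) (hS0 : S.Nonempty) (hv : v ∉ var F) (hv0 : v ≠ 0) :
    deficiency (splitOn F S v) = deficiency F + S.card - 1 := by
  simp only [deficiency, numVar, card_splitOn hS hv hv0, var_splitOn hS hS0,
    Finset.card_insert_of_notMem hv]
  push_cast
  ring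

theorem fullClauses_splitOn (hS : S ⊆ fullClauses F) (hS0 : S.Nonempty) (hv : v ∉ var F) :
    fullClauses (splitOn F S v) = S.biUnion (splitClause v) := by
  have hSF : S ⊆ F := hS.trans (Finset.filter_subset _ _)
  ext D
  rw [mem_fullClauses, mem_splitOn, var_splitOn hSF hS0, Finset.mem_biUnion]
  constructor
  · rintro ⟨⟨hDF, -⟩ | hD, hfull⟩
    · exact absurd (clauseVar_subset_var hDF (hfull ▸ Finset.mem_insert_self v _)) hv
    · exact hD
  · rintro ⟨A, hA, hDA⟩
    refine ⟨.inr ⟨A, hA, hDA⟩, ?_⟩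
    rw [clauseVar_of_mem_splitClause hDA, (mem_fullClauses.1 (hS hA)).2]

theorem UnsatHitting.exists_deficiency_add_nfc_eq (hF : UnsatHitting F) {n : ℕ} (hn : n < nfc F) :
    ∃ G, UnsatHitting G ∧ deficiency G = deficiency F + n ∧ nfc G = 2 * (n + 1) := by
  obtain ⟨S, hS, hcard⟩ := Finset.exists_subset_card_eq (s := fullClauses F) (n := n + 1) hn
  have hS0 : S.Nonempty := Finset.card_pos.1 (by omega)
  have hSF : S ⊆ F := hS.trans (Finset.filter_subset _ _)
  obtain ⟨v, hv⟩ := Infinite.exists_notMem_finset (insert 0 (var F))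
  obtain ⟨hv0, hv⟩ := not_or.1 (Finset.mem_insert.not.1 hv)
  refine ⟨splitOn F S v, ⟨hF.isClauseSet.splitOn hSF hv hv0,
    not_satisfiable_splitOn hF.not_satisfiable, hF.hitting.splitOn hSF⟩, ?_, ?_⟩
  · rw [deficiency_splitOn hSF hS0 hv hv0, hcard]
    push_cast
    ring
  · change (fullClauses (splitOn F S v)).card = _
    rw [fullClauses_splitOn hS hS0 hv,
      card_biUnion_splitClause (fun h => hv (var_mono hSF h)) hv0, hcard]

end SplitOn

section Smarandache

theorem pow_add_dvd_factorial_mul_iff {p : ℕ} (hp : p.Prime) {l m : ℕ} :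
    p ^ (l + m) ∣ (p * m).factorial ↔ p ^ l ∣ m.factorial := by
  have := Fact.mk hp
  rw [padicValNat_dvd_iff_le (Nat.factorial_ne_zero _),
    padicValNat_dvd_iff_le (Nat.factorial_ne_zero _), padicValNat_factorial_mul,
    Nat.add_le_add_iff_right]

variable {k l m n : ℕ}

theorem two_pow_dvd_factorial_S2 (k : ℕ) : 2 ^ k ∣ (S2 k).factorial :=
  Nat.sInf_mem (s := {n : ℕ | 2 ^ k ∣ n.factorial})
    ⟨2 ^ k, Nat.dvd_factorial (by positivity) le_rfl⟩

theorem S2_le_iff : S2 k ≤ n ↔ 2 ^ k ∣ n.factorial :=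
  ⟨fun h => (two_pow_dvd_factorial_S2 k).trans (Nat.factorial_dvd_factorial h),
    fun h => Nat.sInf_le h⟩

theorem S2_add_le_two_mul_iff : S2 (l + m) ≤ 2 * m ↔ S2 l ≤ m := by
  rw [S2_le_iff, S2_le_iff, pow_add_dvd_factorial_mul_iff Nat.prime_two]

theorem S2_le_two_mul (k : ℕ) : S2 k ≤ 2 * k := by
  have h0 : S2 0 ≤ k := S2_le_iff.2 (by rw [pow_zero]; exact one_dvd _)
  simpa only [zero_add] using S2_add_le_two_mul_iff.2 h0

theorem two_lt_S2 (hk : 2 ≤ k) : 2 < S2 k := by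
  rw [← not_le, S2_le_iff, Nat.factorial_two]
  exact fun h => absurd (Nat.le_of_dvd two_pos ((pow_dvd_pow 2 hk).trans h)) (by norm_num)

theorem S2_one : S2 1 = 2 := by
  refine le_antisymm (S2_le_two_mul 1) (Nat.succ_le_of_lt ?_)
  rw [← not_le, S2_le_iff]
  decide

theorem even_S2 (k : ℕ) : Even (S2 k) := by
  by_contra hodd
  obtain ⟨j, hj⟩ := Nat.not_even_iff_odd.1 hodd
  have hdvd := two_pow_dvd_factorial_S2 k
  rw [hj, Nat.factorial_succ] at hdvd
  have hcop : Nat.Coprime (2 ^ k) (2 * j + 1) := (Nat.coprime_two_left.2 ⟨j, rfl⟩).pow_left k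
  have := S2_le_iff.2 (hcop.dvd_of_dvd_mul_left hdvd)
  omega

end Smarandache

theorem exists_unsatHitting_nfc_eq_S2 {k : ℕ} (hk : 1 ≤ k) :
    ∃ F, UnsatHitting F ∧ deficiency F = k ∧ nfc F = S2 k := by
  induction k using Nat.strong_induction_on with
  | _ k ih =>
    rcases hk.eq_or_lt with rfl | hk
    · obtain ⟨F, hF, hδ, hnfc⟩ :=
        unsatHitting_singleton_empty.exists_deficiency_add_nfc_eq (n := 0) (by decide)
      exact ⟨F, hF, by rw [hδ]; decide, by rw [hnfc, S2_one]⟩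
    · obtain ⟨n, hn⟩ : ∃ n, S2 k = 2 * (n + 1) := by
        obtain ⟨m, hm⟩ := even_S2 k
        exact ⟨m - 1, by have := two_lt_S2 hk; omega⟩
      have hn0 : 0 < n := by have := two_lt_S2 hk; omega
      have hnk : n < k := by have := S2_le_two_mul k; omega
      obtain ⟨l, rfl⟩ := Nat.exists_eq_add_of_le' hnk.le
      have hln : n < S2 l := by
        rw [← not_le, ← S2_add_le_two_mul_iff]
        omega
      obtain ⟨F, hF, hδ, hnfc⟩ := ih l (by omega) (by omega)
      obtain ⟨G, hG, hδG, hnfcG⟩ := hF.exists_deficiency_add_nfc_eq (hnfc ▸ hln)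
      exact ⟨G, hG, by rw [hδG, hδ, Nat.cast_add], by rw [hnfcG, hn]⟩

section Bound

variable {C D : Finset ℤ} {F : Finset (Finset ℤ)} {x y : ℤ}

theorem exists_subset_of_not_satisfiable (hu : ¬ Satisfiable F) (hC : IsClause C)
    (hvar : var F ⊆ clauseVar C) : ∃ D ∈ F, D ⊆ C := by
  -- The assignment falsifying `C` assigns all variables of `F`, so it falsifies some `D ∈ F`.
  by_contra! h
  refine hu ⟨C.image (-·), hC.image_neg, fun D hD => ?_⟩
  obtain ⟨y, hyD, hyC⟩ := Finset.not_subset.1 (h D hD)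
  have hy : y.natAbs ∈ clauseVar C :=
    hvar (clauseVar_subset_var hD (natAbs_mem_clauseVar.2 (.inl hyD)))
  exact ⟨y, Finset.mem_inter.2 ⟨Finset.mem_image.2
    ⟨-y, (natAbs_mem_clauseVar.1 hy).resolve_left hyC, neg_neg y⟩, hyD⟩⟩

/-- The clause `C` with its literal `x` replaced by the complement `-x`, for `x ∈ C`. -/
def flipLiteral (x : ℤ) (C : Finset ℤ) : Finset ℤ := insert (-x) (C.erase x)

theorem IsClause.flipLiteral (hC : IsClause C) (hx : x ∈ C) : IsClause (flipLiteral x C) :=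
  (hC.mono (C.erase_subset x)).insert (neg_ne_zero.2 (ne_of_mem_of_not_mem hx hC.1)) (by simp)

theorem clauseVar_flipLiteral (hx : x ∈ C) : clauseVar (flipLiteral x C) = clauseVar C := by
  conv_rhs => rw [← Finset.insert_erase hx]
  rw [flipLiteral, clauseVar_insert, clauseVar_insert, Int.natAbs_neg]

theorem eq_of_neg_mem_flipLiteral (hC : IsClause C) (hy : y ∈ C)
    (h : -y ∈ flipLiteral x C) : y = x := by
  rcases Finset.mem_insert.1 h with h | h
  · exact neg_inj.1 h
  · exact absurd (Finset.mem_of_mem_erase h) (hC.2 y hy)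

theorem exists_subset_flipLiteral (hu : ¬ Satisfiable F)
    (ha : IsAntichain (· ⊆ ·) (F : Set (Finset ℤ))) (hC : IsClause C)
    (hfull : C ∈ fullClauses F) (hx : x ∈ C) :
    ∃ D ∈ F, -x ∈ D ∧ D ⊆ flipLiteral x C := by
  obtain ⟨hCF, hvar⟩ := mem_fullClauses.1 hfull
  obtain ⟨D, hD, hDC⟩ := exists_subset_of_not_satisfiable hu (hC.flipLiteral hx)
    (by rw [clauseVar_flipLiteral hx, hvar])
  refine ⟨D, hD, ?_, hDC⟩
  by_contra hxD
  have hDx : D ⊆ C.erase x := (Finset.subset_insert_iff_of_notMem hxD).1 hDC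
  have hDeq : D = C := ha.eq hD hCF (hDx.trans (C.erase_subset x))
  exact Finset.notMem_erase x C (hDx (hDeq ▸ hx))

theorem card_filter_neg_mem_le_deficiency (hu : ¬ Satisfiable F)
    (ha : IsAntichain (· ⊆ ·) (F : Set (Finset ℤ))) (hC : IsClause C)
    (hfull : C ∈ fullClauses F) (hx : x ∈ C) :
    ((F.filter (-x ∈ ·)).card : ℤ) ≤ deficiency F := by
  obtain ⟨hCF, hvar⟩ := mem_fullClauses.1 hfull
  choose! N hNF hNmem hNsub using fun y (hy : y ∈ C) => exists_subset_flipLiteral hu ha hC hfull hy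
  have hNinj : Set.InjOn N C := fun y hy z hz hyz =>
    eq_of_neg_mem_flipLiteral hC hy (hNsub z hz (hyz ▸ hNmem y hy))
  have hCnot : C ∉ (C.erase x).image N := fun h => by
    obtain ⟨y, hy, hyC⟩ := Finset.mem_image.1 h
    have hyC' := Finset.mem_of_mem_erase hy
    exact hC.2 y hyC' (hyC ▸ hNmem y hyC')
  have hcard : (insert C ((C.erase x).image N)).card = numVar F := by
    rw [Finset.card_insert_of_notMem hCnot,
      Finset.card_image_of_injOn (hNinj.mono (by simp)),
      Finset.card_erase_add_one hx, ← hC.card_clauseVar, hvar, numVar]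
  have hsub : insert C ((C.erase x).image N) ⊆ F.filter (-x ∉ ·) := by
    refine Finset.insert_subset (Finset.mem_filter.2 ⟨hCF, hC.2 x hx⟩) ?_
    refine Finset.image_subset_iff.2 fun y hy => ?_
    obtain ⟨hyx, hyC⟩ := Finset.mem_erase.1 hy
    exact Finset.mem_filter.2 ⟨hNF y hyC, fun h =>
      hyx (eq_of_neg_mem_flipLiteral hC hx (hNsub y hyC h)).symm⟩
  have hle := Finset.card_le_card hsub
  have hsplit := Finset.card_filter_add_card_filter_not (s := F) (-x ∈ ·)
  rw [deficiency]
  omega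

theorem clash_of_mem_fullClauses (hC : C ∈ fullClauses F) (hD : D ∈ fullClauses F)
    (h : ¬ C ⊆ D) : Clash C D := by
  obtain ⟨x, hxC, hxD⟩ := Finset.not_subset.1 h
  have hx : x.natAbs ∈ clauseVar D := by
    rw [(mem_fullClauses.1 hD).2, ← (mem_fullClauses.1 hC).2]
    exact natAbs_mem_clauseVar.2 (.inl hxC)
  exact ⟨x, hxC, (natAbs_mem_clauseVar.1 hx).resolve_left hxD⟩

theorem nfc_le_card_filter_mem_add (hx : x.natAbs ∈ var F) :
    nfc F ≤ (F.filter (x ∈ ·)).card + (F.filter (-x ∈ ·)).card := by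
  refine (Finset.card_le_card fun D hD => ?_).trans (Finset.card_union_le _ _)
  obtain ⟨hDF, hfull⟩ := Finset.mem_filter.1 hD
  rw [← Finset.filter_or]
  exact Finset.mem_filter.2 ⟨hDF, natAbs_mem_clauseVar.1 (hfull ▸ hx)⟩

theorem nfc_le_max_one_two_mul_deficiency (hF : IsClauseSet F) (hu : ¬ Satisfiable F)
    (ha : IsAntichain (· ⊆ ·) (F : Set (Finset ℤ))) :
    (nfc F : ℤ) ≤ max 1 (2 * deficiency F) := by
  by_cases hle_one : nfc F ≤ 1
  · exact le_max_of_le_left (by exact_mod_cast hle_one)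
  obtain ⟨A, hA, B, hB, hne⟩ := Finset.one_lt_card.1 (not_le.1 hle_one)
  have hAF := (mem_fullClauses.1 hA).1
  have hBF := (mem_fullClauses.1 hB).1
  obtain ⟨x, hxA, hxB⟩ := clash_of_mem_fullClauses hA hB (ha hAF hBF hne)
  have hneg := card_filter_neg_mem_le_deficiency hu ha (hF A hAF) hA hxA
  have hpos := card_filter_neg_mem_le_deficiency hu ha (hF B hBF) hB hxB
  rw [neg_neg] at hpos
  have hle := nfc_le_card_filter_mem_add
    (clauseVar_subset_var hAF (natAbs_mem_clauseVar.2 (.inl hxA)))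
  refine le_max_of_le_right ?_
  omega

end Bound

theorem stmt_16 : ∀ k : ℕ, 1 ≤ k →
    (∃ F : Finset (Finset ℤ), IsClauseSet F ∧ ¬ Satisfiable F ∧ Hitting F ∧
      deficiency F = (k : ℤ) ∧ nfc F = S2 k) ∧
    S2 k ≤ sSup {m : ℕ | ∃ F : Finset (Finset ℤ), IsClauseSet F ∧ ¬ Satisfiable F ∧
      Hitting F ∧ deficiency F = (k : ℤ) ∧ nfc F = m} := by
  intro k hk
  obtain ⟨F, hF, hδ, hnfc⟩ := exists_unsatHitting_nfc_eq_S2 hk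
  have hex : ∃ F : Finset (Finset ℤ), IsClauseSet F ∧ ¬ Satisfiable F ∧ Hitting F ∧
      deficiency F = (k : ℤ) ∧ nfc F = S2 k :=
    ⟨F, hF.isClauseSet, hF.not_satisfiable, hF.hitting, hδ, hnfc⟩
  refine ⟨hex, le_csSup ⟨2 * k, ?_⟩ hex⟩
  rintro m ⟨G, hG, hu, hh, hδG, rfl⟩
  have := nfc_le_max_one_two_mul_deficiency hG hu (hh.isAntichain hG)
  omega
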